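/- In the tied braid monoid TB_n^B of type B, the generalized ties φ_j commute with all the ties η_i: φ_j η_i = η_i φ_j for all 1 ≤ i ≤ n−1 and all 1 ≤ j ≤ n. -/

import Mathlib

/-! The tied braid monoid of type B, `TBₙᴮ`, presented by generators and relations. -/

/-- Generators of the tied braid monoid of type B on `n` (moving) strands:
`sig i` is `σ_{i+1}`, `sigInv i` is `σ_{i+1}⁻¹`, `rho` is `ρ₁`, `rhoInv` is `ρ₁⁻¹`,
`phi` is `φ₁` and `eta i` is `η_{i+1}` (for `i : Fin (n-1)`). -/
inductive TBGen (n : ℕ) : Type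
  | sig : Fin (n - 1) → TBGen n
  | sigInv : Fin (n - 1) → TBGen n
  | rho : TBGen n
  | rhoInv : TBGen n
  | phi : TBGen n
  | eta : Fin (n - 1) → TBGen n

namespace TiedBraidB

variable (n : ℕ)

/-- The word `σᵢ` (for `1 ≤ i ≤ n-1`; junk value `1` otherwise). -/
def wσ (i : ℕ) : FreeMonoid (TBGen n) :=
  if h : 1 ≤ i ∧ i ≤ n - 1 then FreeMonoid.of (TBGen.sig ⟨i - 1, by omega⟩) else 1

/-- The word `σᵢ⁻¹`. -/
def wσi (i : ℕ) : FreeMonoid (TBGen n) :=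
  if h : 1 ≤ i ∧ i ≤ n - 1 then FreeMonoid.of (TBGen.sigInv ⟨i - 1, by omega⟩) else 1

/-- The word `ηᵢ`. -/
def wη (i : ℕ) : FreeMonoid (TBGen n) :=
  if h : 1 ≤ i ∧ i ≤ n - 1 then FreeMonoid.of (TBGen.eta ⟨i - 1, by omega⟩) else 1

/-- The word `ρ₁`. -/
def wρ : FreeMonoid (TBGen n) := FreeMonoid.of TBGen.rho

/-- The word `ρ₁⁻¹`. -/
def wρi : FreeMonoid (TBGen n) := FreeMonoid.of TBGen.rhoInv

/-- The word `φ₁`. -/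
def wφ : FreeMonoid (TBGen n) := FreeMonoid.of TBGen.phi

/-- The descending word `σₖ σₖ₋₁ ⋯ σ₁`. -/
def wσDesc : ℕ → FreeMonoid (TBGen n)
  | 0 => 1
  | k + 1 => wσ n (k + 1) * wσDesc k

/-- The ascending word `σ₁ σ₂ ⋯ σₖ`. -/
def wσAsc : ℕ → FreeMonoid (TBGen n)
  | 0 => 1
  | k + 1 => wσAsc k * wσ n (k + 1)

/-- The descending word `σₖ⁻¹ σₖ₋₁⁻¹ ⋯ σ₁⁻¹`. -/
def wσiDesc : ℕ → FreeMonoid (TBGen n)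
  | 0 => 1
  | k + 1 => wσi n (k + 1) * wσiDesc k

/-- The ascending word `σ₁⁻¹ σ₂⁻¹ ⋯ σₖ⁻¹`. -/
def wσiAsc : ℕ → FreeMonoid (TBGen n)
  | 0 => 1
  | k + 1 => wσiAsc k * wσi n (k + 1)

/-- The defining relations of the tied braid monoid `TBₙᴮ` of type B. -/
inductive tbRel : FreeMonoid (TBGen n) → FreeMonoid (TBGen n) → Prop
  | sig_inv (i : ℕ) (h1 : 1 ≤ i) (h2 : i ≤ n - 1) :
      tbRel (wσ n i * wσi n i) 1
  | inv_sig (i : ℕ) (h1 : 1 ≤ i) (h2 : i ≤ n - 1) :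
      tbRel (wσi n i * wσ n i) 1
  | rho_inv : tbRel (wρ n * wρi n) 1
  | inv_rho : tbRel (wρi n * wρ n) 1
  | sig_comm (i j : ℕ) (h1 : 1 ≤ i) (h2 : i + 1 < j) (h3 : j ≤ n - 1) :
      tbRel (wσ n i * wσ n j) (wσ n j * wσ n i)
  | sig_braid (i : ℕ) (h1 : 1 ≤ i) (h2 : i + 1 ≤ n - 1) :
      tbRel (wσ n i * wσ n (i + 1) * wσ n i) (wσ n (i + 1) * wσ n i * wσ n (i + 1))
  | rho_sig (i : ℕ) (h1 : 2 ≤ i) (h2 : i ≤ n - 1) :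
      tbRel (wρ n * wσ n i) (wσ n i * wρ n)
  | rho_sig_rho_sig (h : 2 ≤ n) :
      tbRel (wρ n * wσ n 1 * wρ n * wσ n 1) (wσ n 1 * wρ n * wσ n 1 * wρ n)
  | eta_comm (i j : ℕ) (h1 : 1 ≤ i) (h2 : i ≤ n - 1) (h3 : 1 ≤ j) (h4 : j ≤ n - 1) :
      tbRel (wη n i * wη n j) (wη n j * wη n i)
  | eta_sig (i : ℕ) (h1 : 1 ≤ i) (h2 : i ≤ n - 1) :
      tbRel (wη n i * wσ n i) (wσ n i * wη n i)
  | eta_sig_far (i j : ℕ) (h1 : 1 ≤ i) (h2 : i ≤ n - 1) (h3 : 1 ≤ j) (h4 : j ≤ n - 1)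
      (h5 : i + 1 < j ∨ j + 1 < i) :
      tbRel (wη n i * wσ n j) (wσ n j * wη n i)
  | eta_sig_sig (i j : ℕ) (h1 : 1 ≤ i) (h2 : i ≤ n - 1) (h3 : 1 ≤ j) (h4 : j ≤ n - 1)
      (h5 : j = i + 1 ∨ i = j + 1) :
      tbRel (wη n i * wσ n j * wσ n i) (wσ n j * wσ n i * wη n j)
  | eta_sig_sigInv (i j : ℕ) (h1 : 1 ≤ i) (h2 : i ≤ n - 1) (h3 : 1 ≤ j) (h4 : j ≤ n - 1)
      (h5 : j = i + 1 ∨ i = j + 1) :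
      tbRel (wη n i * wσ n j * wσi n i) (wσ n j * wσi n i * wη n j)
  | eta_eta_sig (i j : ℕ) (h1 : 1 ≤ i) (h2 : i ≤ n - 1) (h3 : 1 ≤ j) (h4 : j ≤ n - 1)
      (h5 : j = i + 1 ∨ i = j + 1) :
      tbRel (wη n i * wη n j * wσ n i) (wσ n i * wη n i * wη n j)
  | eta_eta_sig' (i j : ℕ) (h1 : 1 ≤ i) (h2 : i ≤ n - 1) (h3 : 1 ≤ j) (h4 : j ≤ n - 1)
      (h5 : j = i + 1 ∨ i = j + 1) :
      tbRel (wη n i * wη n j * wσ n i) (wη n j * wσ n i * wη n j)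
  | eta_idem (i : ℕ) (h1 : 1 ≤ i) (h2 : i ≤ n - 1) :
      tbRel (wη n i * wη n i) (wη n i)
  | phi_idem : tbRel (wφ n * wφ n) (wφ n)
  | rho_eta (i : ℕ) (h1 : 1 ≤ i) (h2 : i ≤ n - 1) :
      tbRel (wρ n * wη n i) (wη n i * wρ n)
  | rho_phi : tbRel (wρ n * wφ n) (wφ n * wρ n)
  | phi_eta (i : ℕ) (h1 : 1 ≤ i) (h2 : i ≤ n - 1) :
      tbRel (wφ n * wη n i) (wη n i * wφ n)
  | phi_sig (i : ℕ) (h1 : 2 ≤ i) (h2 : i ≤ n - 1) :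
      tbRel (wφ n * wσ n i) (wσ n i * wφ n)
  | phi_move (i : ℕ) (h1 : 2 ≤ i) (h2 : i ≤ n) :
      tbRel (wσDesc n (i - 1) * wφ n * wσiAsc n (i - 1))
        (wσiDesc n (i - 1) * wφ n * wσAsc n (i - 1))
  | phi_eta_one (h : 2 ≤ n) :
      tbRel (wφ n * wη n 1) (wφ n * wσ n 1 * wφ n * wσi n 1)
  | phi_eta_one' (h : 2 ≤ n) :
      tbRel (wφ n * wσ n 1 * wφ n * wσi n 1) (wσ n 1 * wφ n * wσi n 1 * wη n 1)

/-- The tied braid monoid of type B on `n` strands. -/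
def TB : Type := (conGen (tbRel n)).Quotient

instance : Monoid (TB n) := inferInstanceAs (Monoid (conGen (tbRel n)).Quotient)

/-- The canonical projection from the free monoid on the generators onto `TBₙᴮ`. -/
def mk : FreeMonoid (TBGen n) →* TB n := Con.mk' _

/-- The generator `σᵢ` of `TBₙᴮ`. -/
def σB (i : ℕ) : TB n := mk n (wσ n i)

/-- The generator `σᵢ⁻¹` of `TBₙᴮ`. -/
def σiB (i : ℕ) : TB n := mk n (wσi n i)

/-- The generator `ρ₁` of `TBₙᴮ`. -/
def ρB : TB n := mk n (wρ n)

/-- The generator `ρ₁⁻¹` of `TBₙᴮ`. -/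
def ρiB : TB n := mk n (wρi n)

/-- The generator `φ₁` of `TBₙᴮ`. -/
def φB : TB n := mk n (wφ n)

/-- The generator `ηᵢ` of `TBₙᴮ`. -/
def ηB (i : ℕ) : TB n := mk n (wη n i)

/-- The word `σᵢ σᵢ₊₁ ⋯ σₖ` (empty if `k < i`). -/
def wσRange (i k : ℕ) : FreeMonoid (TBGen n) :=
  ((List.range' i (k + 1 - i)).map (wσ n)).prod

/-- The word `σₖ⁻¹ σₖ₋₁⁻¹ ⋯ σᵢ⁻¹` (empty if `k < i`). -/
def wσiRangeRev (i k : ℕ) : FreeMonoid (TBGen n) :=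
  ((List.range' i (k + 1 - i)).reverse.map (wσi n)).prod

/-- The word representing the generalized tie `η_{i,j}`:
`σᵢ ⋯ σ_{j-2} η_{j-1} σ_{j-2}⁻¹ ⋯ σᵢ⁻¹` for `i < j`, with the conventions
`η_{i,i} = 1` and `η_{j,i} = η_{i,j}`. -/
def wηg (i j : ℕ) : FreeMonoid (TBGen n) :=
  if i = j then 1
  else wσRange n (min i j) (max i j - 2) * wη n (max i j - 1) *
    wσiRangeRev n (min i j) (max i j - 2)

/-- The word representing the generalized tie `φⱼ = σ_{j-1} ⋯ σ₁ φ₁ σ₁⁻¹ ⋯ σ_{j-1}⁻¹`. -/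
def wφg (j : ℕ) : FreeMonoid (TBGen n) :=
  wσDesc n (j - 1) * wφ n * wσiAsc n (j - 1)

/-- The generalized tie `η_{i,j}` joining the `i`-th and `j`-th moving strands. -/
def ηg (i j : ℕ) : TB n := mk n (wηg n i j)

/-- The generalized tie `φⱼ` joining the fixed strand and the `j`-th moving strand. -/
def φg (j : ℕ) : TB n := mk n (wφg n j)

end TiedBraidB

/-!
Conjugation by `σⱼ` carries `φⱼ` to `φⱼ₊₁`, and `φₖ` commutes with `σᵢ` for `k < i`. For
`|i - j| = 1` the relation `ηᵢσⱼσᵢ = σⱼσᵢηⱼ` says that conjugation by `σⱼσᵢ` carries `ηⱼ` to `ηᵢ`.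
Hence a single conjugation transports the commutation of one pair to the commutation of another:

* `(φⱼ, ηᵢ)` to `(φⱼ₊₁, ηᵢ)` by `σⱼ`, when `j = i` or `|i - j| > 1`;
* `(φⱼ, ηⱼ)` to `(φⱼ₊₁, ηⱼ₊₁)` by `σⱼσⱼ₊₁`;
* `(φᵢ, ηᵢ₊₁)` to `(φᵢ₊₂, ηᵢ)` by `σᵢ₊₁σᵢ`.

Every pair `(φⱼ, ηᵢ)` is reached in this way from pairs `(φ₁, ηₖ)`, which commute by definition.
-/

namespace TiedBraidB

theorem commute_of_semiconjBy {S : Type*} [Semigroup S] {u a a' b b' : S} (hu : IsRightRegular u)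
    (ha : SemiconjBy u a a') (hb : SemiconjBy u b b') (h : Commute a b) : Commute a' b' :=
  hu <| calc
    a' * b' * u = u * (a * b) := (ha.mul_right hb).eq.symm
    _ = u * (b * a) := by rw [h.eq]
    _ = b' * a' * u := (hb.mul_right ha).eq

variable {n i j k : ℕ}

theorem mk_eq_mk_of_tbRel {v w : FreeMonoid (TBGen n)} (h : tbRel n v w) : mk n v = mk n w :=
  (Con.eq _).2 (ConGen.Rel.of _ _ h)

theorem σB_mul_σiB (hi : 1 ≤ i) (hin : i ≤ n - 1) : σB n i * σiB n i = 1 :=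
  mk_eq_mk_of_tbRel (.sig_inv i hi hin)

theorem σiB_mul_σB (hi : 1 ≤ i) (hin : i ≤ n - 1) : σiB n i * σB n i = 1 :=
  mk_eq_mk_of_tbRel (.inv_sig i hi hin)

theorem isRightRegular_σB (hi : 1 ≤ i) (hin : i ≤ n - 1) : IsRightRegular (σB n i) :=
  isRightRegular_of_mul_eq_one (σB_mul_σiB hi hin)

theorem commute_σB_σB_of_lt (hi : 1 ≤ i) (hij : i + 1 < j) (hjn : j ≤ n - 1) :
    Commute (σB n i) (σB n j) :=
  mk_eq_mk_of_tbRel (.sig_comm i j hi hij hjn)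

theorem commute_σB_ηB_self (hi : 1 ≤ i) (hin : i ≤ n - 1) : Commute (σB n i) (ηB n i) :=
  (mk_eq_mk_of_tbRel (.eta_sig i hi hin)).symm

theorem commute_σB_ηB_of_far (hj : 1 ≤ j) (hjn : j ≤ n - 1) (hi : 1 ≤ i) (hin : i ≤ n - 1)
    (hij : i + 1 < j ∨ j + 1 < i) : Commute (σB n j) (ηB n i) :=
  (mk_eq_mk_of_tbRel (.eta_sig_far i j hi hin hj hjn hij)).symm

theorem semiconjBy_σB_mul_σB_ηB (hj : 1 ≤ j) (hjn : j ≤ n - 1) (hi : 1 ≤ i) (hin : i ≤ n - 1)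
    (hij : j = i + 1 ∨ i = j + 1) : SemiconjBy (σB n j * σB n i) (ηB n j) (ηB n i) := by
  rw [SemiconjBy, ← mul_assoc (ηB n i)]
  exact (mk_eq_mk_of_tbRel (.eta_sig_sig i j hi hin hj hjn hij)).symm

theorem φg_one : φg n 1 = φB n := by
  simp [φg, wφg, wσDesc, wσiAsc, φB]

theorem commute_φg_one_σB (hi : 2 ≤ i) (hin : i ≤ n - 1) : Commute (φg n 1) (σB n i) := by
  rw [φg_one]
  exact mk_eq_mk_of_tbRel (.phi_sig i hi hin)

theorem commute_φg_one_ηB (hi : 1 ≤ i) (hin : i ≤ n - 1) : Commute (φg n 1) (ηB n i) := by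
  rw [φg_one]
  exact mk_eq_mk_of_tbRel (.phi_eta i hi hin)

theorem φg_succ (hj : 1 ≤ j) : φg n (j + 1) = σB n j * φg n j * σiB n j := by
  obtain ⟨k, rfl⟩ := Nat.exists_eq_add_of_le' hj
  simp [φg, wφg, wσDesc, wσiAsc, σB, σiB, mul_assoc]

theorem semiconjBy_σB_φg (hj : 1 ≤ j) (hjn : j ≤ n - 1) :
    SemiconjBy (σB n j) (φg n j) (φg n (j + 1)) := by
  rw [SemiconjBy, φg_succ hj, mul_assoc _ (σiB n j), σiB_mul_σB hj hjn, mul_one]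

theorem commute_φg_of_commute_σB {x : TB n} (hj : 1 ≤ j) (hjk : j ≤ k) (hkn : k ≤ n)
    (hφ : Commute (φg n j) x) (hσ : ∀ l, j ≤ l → l < k → Commute (σB n l) x) :
    Commute (φg n k) x := by
  induction k, hjk using Nat.le_induction with
  | base => exact hφ
  | succ k hjk ih =>
    have hk : 1 ≤ k := hj.trans hjk
    have hkn' : k ≤ n - 1 := Nat.le_sub_one_of_lt hkn
    have hφk : Commute (φg n k) x := ih (by omega) fun l hjl hlk => hσ l hjl (by omega)
    exact commute_of_semiconjBy (isRightRegular_σB hk hkn') (semiconjBy_σB_φg hk hkn')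
      (hσ k hjk k.lt_succ_self) hφk

theorem commute_φg_σB_of_lt (hj : 1 ≤ j) (hji : j < i) (hin : i ≤ n - 1) :
    Commute (φg n j) (σB n i) :=
  commute_φg_of_commute_σB le_rfl hj (by omega) (commute_φg_one_σB (by omega) hin)
    fun _ hl hlj => commute_σB_σB_of_lt hl (by omega) hin

theorem commute_φg_ηB_of_lt (hj : 1 ≤ j) (hji : j < i) (hin : i ≤ n - 1) :
    Commute (φg n j) (ηB n i) :=
  commute_φg_of_commute_σB le_rfl hj (by omega) (commute_φg_one_ηB (by omega) hin)
    fun _ hl hlj => commute_σB_ηB_of_far hl (by omega) (by omega) hin (by omega)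

theorem commute_φg_ηB_self (hj : 1 ≤ j) (hjn : j ≤ n - 1) : Commute (φg n j) (ηB n j) := by
  induction j, hj using Nat.le_induction with
  | base => exact commute_φg_one_ηB le_rfl hjn
  | succ j hj ih =>
    have hj' : 1 ≤ j + 1 := by omega
    have hjn' : j ≤ n - 1 := by omega
    have hφ : SemiconjBy (σB n j * σB n (j + 1)) (φg n j) (φg n (j + 1)) :=
      (semiconjBy_σB_φg hj hjn').mul_left (commute_φg_σB_of_lt hj j.lt_succ_self hjn).symm
    exact commute_of_semiconjBy ((isRightRegular_σB hj hjn').mul (isRightRegular_σB hj' hjn)) hφ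
      (semiconjBy_σB_mul_σB_ηB hj hjn' hj' hjn (.inr rfl)) (ih hjn')

theorem commute_φg_succ_ηB (hi : 1 ≤ i) (hin : i ≤ n - 1) : Commute (φg n (i + 1)) (ηB n i) :=
  commute_of_semiconjBy (isRightRegular_σB hi hin) (semiconjBy_σB_φg hi hin)
    (commute_σB_ηB_self hi hin) (commute_φg_ηB_self hi hin)

theorem commute_φg_add_two_ηB (hi : 1 ≤ i) (hin : i + 1 ≤ n - 1) :
    Commute (φg n (i + 2)) (ηB n i) := by
  have hi' : 1 ≤ i + 1 := by omega
  have hin' : i ≤ n - 1 := by omega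
  have hφ : SemiconjBy (σB n (i + 1) * σB n i) (φg n i) (φg n (i + 2)) :=
    (semiconjBy_σB_φg hi' hin).mul_left (semiconjBy_σB_φg hi hin')
  exact commute_of_semiconjBy ((isRightRegular_σB hi' hin).mul (isRightRegular_σB hi hin')) hφ
    (semiconjBy_σB_mul_σB_ηB hi' hin hi hin' (.inl rfl))
    (commute_φg_ηB_of_lt hi i.lt_succ_self hin)

theorem commute_φg_ηB_of_add_two_le (hi : 1 ≤ i) (hij : i + 2 ≤ j) (hjn : j ≤ n) :
    Commute (φg n j) (ηB n i) :=
  commute_φg_of_commute_σB (by omega) hij hjn (commute_φg_add_two_ηB hi (by omega))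
    fun _ hl hlj => commute_σB_ηB_of_far (by omega) (by omega) hi (by omega) (by omega)

end TiedBraidB

open TiedBraidB in
/-- In `TBₙᴮ`, the generalized ties `φⱼ` commute with all the ties
`ηᵢ`: `φⱼ ηᵢ = ηᵢ φⱼ` for all `1 ≤ i ≤ n-1` and all `1 ≤ j ≤ n`. -/
theorem phi_comm_eta (n i j : ℕ) (hi1 : 1 ≤ i) (hi2 : i ≤ n - 1)
    (hj1 : 1 ≤ j) (hj2 : j ≤ n) :
    φg n j * ηB n i = ηB n i * φg n j := by
  obtain hji | rfl | rfl | hij : j < i ∨ j = i ∨ j = i + 1 ∨ i + 2 ≤ j := by omega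
  · exact commute_φg_ηB_of_lt hj1 hji hi2
  · exact commute_φg_ηB_self hi1 hi2
  · exact commute_φg_succ_ηB hi1 hi2
  · exact commute_φg_ηB_of_add_two_le hi1 hij hj2
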